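/- Let N ≥ 1 and let p : ℝ^N → ℝ be a continuous, integrable probability density function (p ≥ 0 and ∫_{ℝ^N} p(x) dx = 1). Then for every ε > 0 there exist an integer K ≥ 1, weights π_1, …, π_K ≥ 0 with Σ_{k=1}^K π_k = 1, mean vectors μ_1, …, μ_K ∈ ℝ^N, and positive definite covariance matrices Σ_1, …, Σ_K such that the finite Gaussian mixture density p_K(x) = Σ_{k=1}^K π_k N(x; μ_k, Σ_k) satisfies ∫_{ℝ^N} |p(x) − p_K(x)| dx < ε. -/

import Mathlib

/-!
The proof discretizes the convolution of `p` with a narrow Gaussian. Write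
`G_c (x) = c ^ N * φ (c • x)`, where `φ` is the standard Gaussian density; this is the density of
the centred Gaussian with covariance `c⁻² • 1`. Both approximation steps upgrade pointwise
convergence of probability densities to `L¹` convergence by Scheffé's lemma
(`tendsto_integral_abs_sub_of_tendsto`).

* As `c → ∞`, the convolution `∫ y, G_c (x - y) * p y` tends to `p x` at every point `x`, because
  `p` is integrable and continuous (`tendsto_integral_comp_smul_smul_of_integrable'`). It has
  integral one by Fubini.
* For fixed `c`, take simple functions `s n` converging pointwise to the identity. Then
  `∫ y, G_c (x - s n y) * p y` tends to `∫ y, G_c (x - y) * p y` for every `x` by dominated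
  convergence, as `G_c` is bounded and continuous. Since `s n` takes finitely many values `a`,
  the former integral is the finite mixture of the `G_c (x - a)` with weights
  `∫ y in s n ⁻¹' {a}, p y`.
-/

open MeasureTheory Real

/-- The Gaussian density `N(x; μ, Σ)` on `ℝ^N` with mean `μ` and covariance matrix `S`. -/
noncomputable def gaussDensity {N : ℕ} (μ : EuclideanSpace ℝ (Fin N))
    (S : Matrix (Fin N) (Fin N) ℝ) (x : EuclideanSpace ℝ (Fin N)) : ℝ :=
  (2 * π) ^ (-(N : ℝ) / 2) * S.det ^ (-(1 : ℝ) / 2) *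
    Real.exp (-(∑ i, ∑ j, (x i - μ i) * S⁻¹ i j * (x j - μ j)) / 2)

open Filter Topology

/-! ### Scheffé's lemma -/

/-- **Scheffé's lemma**: nonnegative functions with the same integral as their pointwise limit
converge to it in `L¹`. -/
lemma tendsto_integral_abs_sub_of_tendsto {α : Type*} [MeasurableSpace α] {m : Measure α}
    {f : α → ℝ} {F : ℕ → α → ℝ} (hf : Integrable f m) (hF : ∀ n, Integrable (F n) m)
    (hf0 : ∀ x, 0 ≤ f x) (hF0 : ∀ n x, 0 ≤ F n x) (hI : ∀ n, ∫ x, F n x ∂m = ∫ x, f x ∂m)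
    (hlim : ∀ x, Tendsto (fun n => F n x) atTop (𝓝 (f x))) :
    Tendsto (fun n => ∫ x, |f x - F n x| ∂m) atTop (𝓝 0) := by
  -- The positive part of `f - F n` is dominated by `f`, and `|t| = 2 * max t 0 - t`.
  have hint : ∀ n, Integrable (fun x => max (f x - F n x) 0) m :=
    fun n => (hf.sub (hF n)).pos_part
  have key : Tendsto (fun n => ∫ x, max (f x - F n x) 0 ∂m) atTop (𝓝 (∫ _, (0 : ℝ) ∂m)) := by
    refine tendsto_integral_of_dominated_convergence f (fun n => (hint n).aestronglyMeasurable)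
      hf (fun n => Eventually.of_forall fun x => ?_) (Eventually.of_forall fun x => ?_)
    · rw [Real.norm_eq_abs, abs_of_nonneg (le_max_right _ _)]
      exact max_le (by linarith [hF0 n x]) (hf0 x)
    · have h : Tendsto (fun n => f x - F n x) atTop (𝓝 (f x - f x)) :=
        tendsto_const_nhds.sub (hlim x)
      simpa using h.max (tendsto_const_nhds (x := (0 : ℝ)))
  have heq : ∀ n, ∫ x, |f x - F n x| ∂m = 2 * ∫ x, max (f x - F n x) 0 ∂m := by
    intro n
    have hpt : ∀ x, |f x - F n x| = 2 * max (f x - F n x) 0 - (f x - F n x) := by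
      intro x
      rcases le_total 0 (f x - F n x) with h | h
      · rw [abs_of_nonneg h, max_eq_left h]; ring
      · rw [abs_of_nonpos h, max_eq_right h]; ring
    simp_rw [hpt]
    have h1 : Integrable (fun x => f x - F n x) m := hf.sub (hF n)
    rw [integral_sub ((hint n).const_mul 2) h1, integral_sub hf (hF n), hI n,
      integral_const_mul]
    ring
  simp_rw [heq]
  simpa using key.const_mul 2

/-! ### Isotropic Gaussian densities -/

/-- The standard Gaussian density on `ℝ^N`. -/
noncomputable def stdGauss (N : ℕ) (x : EuclideanSpace ℝ (Fin N)) : ℝ :=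
  (2 * π) ^ (-(N : ℝ) / 2) * Real.exp (-(‖x‖ ^ 2) / 2)

/-- The density of the centred Gaussian on `ℝ^N` with covariance `c⁻² • 1`, written as a rescaling
of `stdGauss`. -/
noncomputable def scaledGauss (N : ℕ) (c : ℝ) (x : EuclideanSpace ℝ (Fin N)) : ℝ :=
  c ^ N * stdGauss N (c • x)

section Gauss

variable {N : ℕ}

lemma stdGauss_nonneg (x : EuclideanSpace ℝ (Fin N)) : 0 ≤ stdGauss N x := by
  unfold stdGauss; positivity

lemma continuous_stdGauss : Continuous (stdGauss N) := by
  unfold stdGauss; fun_prop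

lemma stdGauss_le (x : EuclideanSpace ℝ (Fin N)) : stdGauss N x ≤ (2 * π) ^ (-(N : ℝ) / 2) := by
  unfold stdGauss
  refine mul_le_of_le_one_right (by positivity) (Real.exp_le_one_iff.2 ?_)
  have := sq_nonneg ‖x‖
  linarith

lemma integral_stdGauss : ∫ x, stdGauss N x = 1 := by
  have h := GaussianFourier.integral_rexp_neg_mul_sq_norm
    (V := EuclideanSpace ℝ (Fin N)) (b := 1 / 2) (by norm_num)
  have h2 : ∀ x : EuclideanSpace ℝ (Fin N), -(‖x‖ ^ 2) / 2 = -(1 / 2) * ‖x‖ ^ 2 :=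
    fun x => by ring
  unfold stdGauss
  simp_rw [h2]
  rw [integral_const_mul, h, finrank_euclideanSpace_fin,
    show π / (1 / 2) = 2 * π by ring, ← Real.rpow_add (by positivity)]
  rw [show -(N : ℝ) / 2 + N / 2 = 0 by ring, Real.rpow_zero]

lemma stdGauss_decay : Tendsto
    (fun x : EuclideanSpace ℝ (Fin N) => ‖x‖ ^ N * stdGauss N x)
    (Bornology.cobounded _) (𝓝 0) := by
  have h1 : Tendsto (fun t : ℝ => (2 * π) ^ (-(N : ℝ) / 2) * Real.exp (1 / 2) *
      (t ^ N * Real.exp (-t))) atTop (𝓝 0) := by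
    simpa using (Real.tendsto_pow_mul_exp_neg_atTop_nhds_zero N).const_mul
      ((2 * π) ^ (-(N : ℝ) / 2) * Real.exp (1 / 2))
  have h2 := h1.comp (tendsto_norm_cobounded_atTop (E := EuclideanSpace ℝ (Fin N)))
  refine squeeze_zero (fun x => mul_nonneg (by positivity) (stdGauss_nonneg x)) (fun x => ?_) h2
  -- `-t² / 2 ≤ 1 / 2 - t` reduces Gaussian decay to exponential decay.
  have h3 : Real.exp (-(‖x‖ ^ 2) / 2) ≤ Real.exp (1 / 2) * Real.exp (-‖x‖) := by
    rw [← Real.exp_add]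
    exact Real.exp_le_exp.2 (by nlinarith [sq_nonneg (‖x‖ - 1)])
  unfold stdGauss
  calc ‖x‖ ^ N * ((2 * π) ^ (-(N : ℝ) / 2) * Real.exp (-(‖x‖ ^ 2) / 2))
      ≤ ‖x‖ ^ N * ((2 * π) ^ (-(N : ℝ) / 2) * (Real.exp (1 / 2) * Real.exp (-‖x‖))) := by gcongr
    _ = _ := by simp only [Function.comp]; ring

variable {c : ℝ}

lemma scaledGauss_nonneg (hc : 0 < c) (x : EuclideanSpace ℝ (Fin N)) : 0 ≤ scaledGauss N c x :=
  mul_nonneg (by positivity) (stdGauss_nonneg _)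

lemma continuous_scaledGauss : Continuous (scaledGauss N c) := by
  unfold scaledGauss
  exact continuous_const.mul (continuous_stdGauss.comp (continuous_const_smul c))

lemma norm_scaledGauss_le (hc : 0 < c) (x : EuclideanSpace ℝ (Fin N)) :
    ‖scaledGauss N c x‖ ≤ c ^ N * (2 * π) ^ (-(N : ℝ) / 2) := by
  rw [Real.norm_of_nonneg (scaledGauss_nonneg hc x)]
  exact mul_le_mul_of_nonneg_left (stdGauss_le _) (by positivity)

lemma integral_scaledGauss (hc : 0 < c) : ∫ x, scaledGauss N c x = 1 := by
  unfold scaledGauss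
  rw [integral_const_mul, Measure.integral_comp_smul, integral_stdGauss,
    finrank_euclideanSpace_fin, abs_of_pos (by positivity), smul_eq_mul, mul_one]
  exact mul_inv_cancel₀ (by positivity)

lemma integrable_scaledGauss (hc : 0 < c) : Integrable (scaledGauss N c) :=
  integrable_of_integral_eq_one (integral_scaledGauss hc)

lemma gaussDensity_eq_scaledGauss (hc : 0 < c) (a x : EuclideanSpace ℝ (Fin N)) :
    gaussDensity a ((c ^ 2)⁻¹ • (1 : Matrix (Fin N) (Fin N) ℝ)) x = scaledGauss N c (x - a) := by
  have hinv : ((c ^ 2)⁻¹ • (1 : Matrix (Fin N) (Fin N) ℝ))⁻¹ = (c ^ 2) • 1 := by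
    apply Matrix.inv_eq_right_inv
    rw [smul_mul_smul_comm, inv_mul_cancel₀ (by positivity), one_smul, one_mul]
  have hdet : ((c ^ 2)⁻¹ • (1 : Matrix (Fin N) (Fin N) ℝ)).det ^ (-(1 : ℝ) / 2) = c ^ N := by
    rw [Matrix.det_smul, Matrix.det_one, mul_one, Fintype.card_fin, inv_pow, ← pow_mul,
      mul_comm 2 N, pow_mul, show -(1 : ℝ) / 2 = -(1 / 2) by ring,
      Real.rpow_neg (by positivity), Real.inv_rpow (by positivity), inv_inv,
      ← Real.sqrt_eq_rpow, Real.sqrt_sq (by positivity)]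
  have hsum : ∑ i, ∑ j, (x i - a i) * ((c ^ 2) • (1 : Matrix (Fin N) (Fin N) ℝ)) i j * (x j - a j)
      = ‖c • (x - a)‖ ^ 2 := by
    rw [norm_smul, mul_pow, EuclideanSpace.norm_sq_eq, Finset.mul_sum]
    refine Finset.sum_congr rfl fun i _ => ?_
    rw [Finset.sum_eq_single i]
    · simp; ring
    · intro j _ hj
      simp [Matrix.one_apply_ne hj.symm]
    · simp
  unfold gaussDensity scaledGauss stdGauss
  rw [hinv, hdet, hsum]
  ring

end Gauss

/-! ### Convolution with a Gaussian and its discretization -/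

section Approximation

variable {N : ℕ} {p : EuclideanSpace ℝ (Fin N) → ℝ} {c : ℝ}

lemma integrable_scaledGauss_conv_integrand (hint : Integrable p) (hc : 0 < c) :
    Integrable (fun z : EuclideanSpace ℝ (Fin N) × EuclideanSpace ℝ (Fin N) =>
      scaledGauss N c (z.1 - z.2) * p z.2) := by
  have h := hint.convolution_integrand (ContinuousLinearMap.mul ℝ ℝ)
    (integrable_scaledGauss (N := N) hc)
  refine h.congr (Eventually.of_forall fun z => ?_)
  simp [mul_comm]

lemma integrable_scaledGauss_conv (hint : Integrable p) (hc : 0 < c) :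
    Integrable (fun x => ∫ y, scaledGauss N c (x - y) * p y) :=
  (integrable_scaledGauss_conv_integrand hint hc).integral_prod_left

lemma integral_scaledGauss_conv (hint : Integrable p) (hc : 0 < c) :
    ∫ x, ∫ y, scaledGauss N c (x - y) * p y = ∫ y, p y := by
  rw [integral_integral_swap (integrable_scaledGauss_conv_integrand hint hc)]
  refine integral_congr_ae (Eventually.of_forall fun y => ?_)
  simp only
  rw [integral_mul_const, integral_sub_right_eq_self (scaledGauss N c), integral_scaledGauss hc,
    one_mul]

/-- `p` is an `L¹` limit of its convolutions with narrow Gaussians. -/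
lemma exists_scaledGauss_conv_close (hcont : Continuous p) (hint : Integrable p)
    (hpos : ∀ x, 0 ≤ p x) {ε : ℝ} (hε : 0 < ε) :
    ∃ c : ℝ, 0 < c ∧ ∫ x, |p x - ∫ y, scaledGauss N c (x - y) * p y| < ε := by
  have hc : ∀ n : ℕ, (0 : ℝ) < n + 1 := fun n => by positivity
  have h := tendsto_integral_abs_sub_of_tendsto hint
    (F := fun (n : ℕ) x => ∫ y, scaledGauss N (n + 1) (x - y) * p y)
    (fun n => integrable_scaledGauss_conv hint (hc n)) hpos
    (fun n x => integral_nonneg fun y => mul_nonneg (scaledGauss_nonneg (hc n) _) (hpos y))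
    (fun n => integral_scaledGauss_conv hint (hc n)) (fun x => by
      have h1 := tendsto_integral_comp_smul_smul_of_integrable' (x₀ := x) (φ := stdGauss N)
        stdGauss_nonneg integral_stdGauss
        (by simpa only [finrank_euclideanSpace_fin] using stdGauss_decay)
        hint hcont.continuousAt
      have h2 : Tendsto (fun n : ℕ => (n : ℝ) + 1) atTop atTop :=
        tendsto_atTop_add_const_right _ _ tendsto_natCast_atTop_atTop
      simpa only [Function.comp_def, finrank_euclideanSpace_fin, smul_eq_mul, scaledGauss]
        using h1.comp h2)
  obtain ⟨n, hn⟩ := (h.eventually_lt_const hε).exists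
  exact ⟨n + 1, hc n, hn⟩

/-- Replacing the centre `y` in the convolution by a simple function of `y` gives a finite
mixture, whose weights are the `p`-masses of the fibres. -/
lemma integral_simpleFunc_eq_sum (hint : Integrable p)
    (s : SimpleFunc (EuclideanSpace ℝ (Fin N)) (EuclideanSpace ℝ (Fin N)))
    (h : EuclideanSpace ℝ (Fin N) → ℝ) :
    ∫ y, h (s y) * p y = ∑ a ∈ s.range, (∫ y in s ⁻¹' {a}, p y) * h a := by
  have hpt : ∀ y, h (s y) * p y = ∑ a ∈ s.range, (s ⁻¹' {a}).indicator p y * h a := by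
    intro y
    rw [Finset.sum_eq_single (s y)]
    · simp [Set.indicator, mul_comm]
    · intro a _ ha
      simp [Set.indicator, ha.symm]
    · intro hy
      exact absurd (s.mem_range_self y) hy
  simp_rw [hpt]
  rw [integral_finsetSum _ fun a _ => (hint.indicator (s.measurableSet_fiber a)).mul_const _]
  simp_rw [integral_mul_const, integral_indicator (s.measurableSet_fiber _)]

/-- The convolution of `p` with a fixed Gaussian is an `L¹` limit of finite Gaussian mixtures. -/
lemma exists_mixture_close (hint : Integrable p) (hpos : ∀ x, 0 ≤ p x) (hnorm : ∫ x, p x = 1)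
    (hc : 0 < c) {ε : ℝ} (hε : 0 < ε) :
    ∃ (t : Finset (EuclideanSpace ℝ (Fin N))) (w : EuclideanSpace ℝ (Fin N) → ℝ),
      (∀ a, 0 ≤ w a) ∧ ∑ a ∈ t, w a = 1 ∧
      ∫ x, |(∫ y, scaledGauss N c (x - y) * p y) - ∑ a ∈ t, w a * scaledGauss N c (x - a)| < ε := by
  let s : ℕ → SimpleFunc (EuclideanSpace ℝ (Fin N)) (EuclideanSpace ℝ (Fin N)) :=
    SimpleFunc.approxOn id measurable_id Set.univ 0 trivial
  have hs : ∀ y, Tendsto (fun n => s n y) atTop (𝓝 y) := fun y =>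
    SimpleFunc.tendsto_approxOn measurable_id (Set.mem_univ _) (by simp)
  let w : ℕ → EuclideanSpace ℝ (Fin N) → ℝ := fun n a => ∫ y in s n ⁻¹' {a}, p y
  have hw : ∀ n a, 0 ≤ w n a := fun n a => integral_nonneg hpos
  have hw1 : ∀ n, ∑ a ∈ (s n).range, w n a = 1 := fun n => by
    simpa [hnorm] using (integral_simpleFunc_eq_sum hint (s n) fun _ => 1).symm
  have hF : ∀ n a, Integrable (fun x => w n a * scaledGauss N c (x - a)) := fun n a =>
    ((integrable_scaledGauss hc).comp_sub_right a).const_mul _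
  have h := tendsto_integral_abs_sub_of_tendsto (integrable_scaledGauss_conv hint hc)
    (F := fun n x => ∑ a ∈ (s n).range, w n a * scaledGauss N c (x - a))
    (fun n => integrable_finsetSum _ fun a _ => hF n a)
    (fun x => integral_nonneg fun y => mul_nonneg (scaledGauss_nonneg hc _) (hpos y))
    (fun n x => Finset.sum_nonneg fun a _ => mul_nonneg (hw n a) (scaledGauss_nonneg hc _))
    (fun n => by
      rw [integral_scaledGauss_conv hint hc, hnorm, integral_finsetSum _ fun a _ => hF n a,
        ← hw1 n]
      refine Finset.sum_congr rfl fun a _ => ?_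
      rw [integral_const_mul, integral_sub_right_eq_self (scaledGauss N c),
        integral_scaledGauss hc, mul_one])
    (fun x => by
      have heq := fun n => integral_simpleFunc_eq_sum hint (s n) fun a => scaledGauss N c (x - a)
      simp only [w, ← heq]
      refine tendsto_integral_of_dominated_convergence
        (fun y => c ^ N * (2 * π) ^ (-(N : ℝ) / 2) * p y) (fun n => ?_) (hint.const_mul _)
        (fun n => Eventually.of_forall fun y => ?_) (Eventually.of_forall fun y => ?_)
      · refine AEStronglyMeasurable.mul ?_ hint.aestronglyMeasurable
        exact (continuous_scaledGauss.measurable.comp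
          (measurable_const.sub (s n).measurable)).aestronglyMeasurable
      · rw [norm_mul, Real.norm_of_nonneg (hpos y)]
        exact mul_le_mul_of_nonneg_right (norm_scaledGauss_le hc _) (hpos y)
      · exact ((continuous_scaledGauss.tendsto _).comp
          (tendsto_const_nhds.sub (hs y))).mul_const _)
  obtain ⟨n, hn⟩ := (h.eventually_lt_const hε).exists
  exact ⟨(s n).range, w n, hw n, hw1 n, hn⟩

end Approximation

/-- Universality of finite Gaussian mixtures in L¹: any continuous integrable probability
density on `ℝ^N` can be approximated arbitrarily well in `L¹` by a finite Gaussian mixture. -/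
theorem gaussian_mixture_universality
    (N : ℕ) (hN : 1 ≤ N) (p : EuclideanSpace ℝ (Fin N) → ℝ)
    (hcont : Continuous p) (hint : Integrable p) (hpos : ∀ x, 0 ≤ p x)
    (hnorm : ∫ x, p x = 1) (ε : ℝ) (hε : 0 < ε) :
    ∃ (K : ℕ) (_ : 1 ≤ K) (w : Fin K → ℝ) (μ : Fin K → EuclideanSpace ℝ (Fin N))
      (S : Fin K → Matrix (Fin N) (Fin N) ℝ),
      (∀ k, 0 ≤ w k) ∧ (∑ k, w k = 1) ∧ (∀ k, (S k).PosDef) ∧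
      ∫ x, |p x - ∑ k, w k * gaussDensity (μ k) (S k) x| < ε := by
  obtain ⟨c, hc, h1⟩ := exists_scaledGauss_conv_close hcont hint hpos (half_pos hε)
  obtain ⟨t, w, hw, hw1, h2⟩ := exists_mixture_close hint hpos hnorm hc (half_pos hε)
  have hsum : ∀ f : EuclideanSpace ℝ (Fin N) → ℝ,
      ∑ k, f (t.equivFin.symm k) = ∑ a ∈ t, f a := fun f => by
    rw [Equiv.sum_comp t.equivFin.symm (fun a : t => f a), Finset.sum_coe_sort t f]
  have ht : 1 ≤ t.card := by
    rw [Nat.one_le_iff_ne_zero, Finset.card_ne_zero, Finset.nonempty_iff_ne_empty]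
    rintro rfl
    simp at hw1
  refine ⟨t.card, ht, fun k => w (t.equivFin.symm k), fun k => t.equivFin.symm k,
    fun _ => (c ^ 2)⁻¹ • 1, fun k => hw _, by rw [hsum, hw1],
    fun _ => Matrix.PosDef.one.smul (by positivity), ?_⟩
  simp_rw [gaussDensity_eq_scaledGauss hc]
  have hmix : ∀ x, ∑ k, w (t.equivFin.symm k) * scaledGauss N c (x - t.equivFin.symm k)
      = ∑ a ∈ t, w a * scaledGauss N c (x - a) := fun x =>
    hsum fun a => w a * scaledGauss N c (x - a)
  simp_rw [hmix]
  have hconv := integrable_scaledGauss_conv hint hc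
  have hmixint : Integrable fun x => ∑ a ∈ t, w a * scaledGauss N c (x - a) :=
    integrable_finsetSum _ fun a _ => ((integrable_scaledGauss hc).comp_sub_right a).const_mul _
  have hi1 : Integrable fun x => |p x - ∫ y, scaledGauss N c (x - y) * p y| :=
    (hint.sub hconv).abs
  have hi2 : Integrable fun x => |(∫ y, scaledGauss N c (x - y) * p y) -
      ∑ a ∈ t, w a * scaledGauss N c (x - a)| := (hconv.sub hmixint).abs
  calc ∫ x, |p x - ∑ a ∈ t, w a * scaledGauss N c (x - a)|
      ≤ ∫ x, (|p x - ∫ y, scaledGauss N c (x - y) * p y| +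
          |(∫ y, scaledGauss N c (x - y) * p y) - ∑ a ∈ t, w a * scaledGauss N c (x - a)|) :=
        integral_mono (hint.sub hmixint).abs
          (hi1.add hi2) fun x => abs_sub_le _ _ _
    _ < ε := by
        rw [integral_add hi1 hi2]
        linarith
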